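/- Let n be a positive integer. Then t(1,3,4,12;n) = (1/2)·N(1,3,4,12; 8n+20) − 2·N(1,3,4,12; 2n+5). -/

import Mathlib

/-!
Put `m = 2n + 5`, which is odd. Completing squares, `tquad 1 3 4 12 n` counts the solutions of `x²
+ 3y² + 4z² + 12w² = 4m` with all variables odd. Write `N(k)` for `Nquad 1 3 4 12 k` and let `S`
be the set of solutions of `(x² + 3y²) + (z² + 3w²) = m` with `x + y` odd.

The key point comes from the Eisenstein integers: for odd `k`, the solutions of `X² + 3Y² = 4k`
with `X`, `Y` odd are obtained from the solutions of `u² + 3v² = k`, each exactly once, through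
the two maps `(u, v) ↦ (u + 3v, u - v)` and `(u, v) ↦ (u - 3v, -u - v)`, which are multiplications
by twice a nontrivial cube root of unity, up to sign and conjugation.

* A solution of the form at `4m` has `x ≡ y (mod 2)`. Those with `x, y` odd are two copies of `S`
  by the above. Those with `x, y` even correspond to all solutions of `x² + 3y² + z² + 3w² = m`;
  exactly one of the two binary forms is odd there, so these are again two copies of `S`. Hence
  `N(4m) = 4 |S|`.
* Among the two copies of `S` with `x, y` odd, either `z, w` are both odd, which gives `tquad 1 3
  4 12 n`, or both even, which gives two copies of the solutions at `m`. Hence `2 |S| = tquad 1 3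
  4 12 n + 2 N(m)`.

Eliminating `|S|` gives the claim.
-/

open scoped BigOperators

/-- `Nquad a b c d n` is the number of quadruples `(x,y,z,w) ∈ ℤ⁴` with
`n = a*x^2 + b*y^2 + c*z^2 + d*w^2`. -/
noncomputable def Nquad (a b c d : ℕ) (n : ℕ) : ℕ :=
  Nat.card {p : ℤ × ℤ × ℤ × ℤ //
    (n : ℤ) = a * p.1 ^ 2 + b * p.2.1 ^ 2 + c * p.2.2.1 ^ 2 + d * p.2.2.2 ^ 2}

/-- `tquad a b c d n` is the number of quadruples `(x,y,z,w) ∈ ℤ⁴` with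
`n = a*x(x-1)/2 + b*y(y-1)/2 + c*z(z-1)/2 + d*w(w-1)/2`. -/
noncomputable def tquad (a b c d : ℕ) (n : ℕ) : ℕ :=
  Nat.card {p : ℤ × ℤ × ℤ × ℤ //
    (n : ℤ) = a * (p.1 * (p.1 - 1) / 2) + b * (p.2.1 * (p.2.1 - 1) / 2)
      + c * (p.2.2.1 * (p.2.2.1 - 1) / 2) + d * (p.2.2.2 * (p.2.2.2 - 1) / 2)}

namespace TriangularForm

/-! ### The solution sets and the maps between them -/

/-- Quadruples of integers. -/
abbrev Quad := ℤ × ℤ × ℤ × ℤ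

/-- Solutions of `x² + 3y² + 4z² + 12w² = m`. -/
def formSet (m : ℤ) : Set Quad :=
  {p | m = p.1 ^ 2 + 3 * p.2.1 ^ 2 + 4 * p.2.2.1 ^ 2 + 12 * p.2.2.2 ^ 2}

/-- Solutions of `x² + 3y² + 4z² + 12w² = m` with all four variables odd. -/
def oddSet (m : ℤ) : Set Quad :=
  {p | p ∈ formSet m ∧ p.1 % 2 = 1 ∧ p.2.1 % 2 = 1 ∧ p.2.2.1 % 2 = 1 ∧ p.2.2.2 % 2 = 1}

/-- Solutions of `x² + 3y² + z² + 3w² = m` with `x + y` odd. -/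
def splitSet (m : ℤ) : Set Quad :=
  {p | m = p.1 ^ 2 + 3 * p.2.1 ^ 2 + p.2.2.1 ^ 2 + 3 * p.2.2.2 ^ 2 ∧ (p.1 + p.2.1) % 2 = 1}

/-- The first embedding of odd binary norms `k` into norms `4k`; its image has `X ≡ Y (mod 4)`. -/
def rotA (p : Quad) : Quad := (p.1 + 3 * p.2.1, p.1 - p.2.1, p.2.2.1, p.2.2.2)

/-- The second embedding of odd binary norms `k` into norms `4k`; its image has
`X ≡ -Y (mod 4)`. -/
def rotB (p : Quad) : Quad := (p.1 - 3 * p.2.1, -p.1 - p.2.1, p.2.2.1, p.2.2.2)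

/-- Doubling of the first pair. -/
def dblFst (p : Quad) : Quad := (2 * p.1, 2 * p.2.1, p.2.2.1, p.2.2.2)

/-- Exchange of the two pairs, followed by doubling of the new first pair. -/
def dblSwap (p : Quad) : Quad := (2 * p.2.2.1, 2 * p.2.2.2, p.1, p.2.1)

/-- Doubling of the second pair. -/
def dblSnd (p : Quad) : Quad := (p.1, p.2.1, 2 * p.2.2.1, 2 * p.2.2.2)

lemma rotA_inj : Function.Injective rotA := by
  rintro ⟨x, y, z, w⟩ ⟨x', y', z', w'⟩ h
  simp only [rotA, Prod.mk.injEq] at h ⊢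
  omega

lemma rotB_inj : Function.Injective rotB := by
  rintro ⟨x, y, z, w⟩ ⟨x', y', z', w'⟩ h
  simp only [rotB, Prod.mk.injEq] at h ⊢
  omega

lemma dblFst_inj : Function.Injective dblFst := by
  rintro ⟨x, y, z, w⟩ ⟨x', y', z', w'⟩ h
  simp only [dblFst, Prod.mk.injEq] at h ⊢
  omega

lemma dblSwap_inj : Function.Injective dblSwap := by
  rintro ⟨x, y, z, w⟩ ⟨x', y', z', w'⟩ h
  simp only [dblSwap, Prod.mk.injEq] at h ⊢
  omega

lemma dblSnd_inj : Function.Injective dblSnd := by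
  rintro ⟨x, y, z, w⟩ ⟨x', y', z', w'⟩ h
  simp only [dblSnd, Prod.mk.injEq] at h ⊢
  omega

/-! ### Parity constraints and decompositions -/

lemma sq_cases (x : ℤ) :
    (x % 2 = 0 ∧ ∃ k, x ^ 2 = 4 * k) ∨ (x % 2 = 1 ∧ ∃ k, x ^ 2 = 8 * k + 1) := by
  rcases Int.emod_two_eq_zero_or_one x with h | h
  · obtain ⟨a, rfl⟩ : ∃ a, x = 2 * a := ⟨x / 2, by omega⟩
    exact Or.inl ⟨h, a ^ 2, by ring⟩
  · refine Or.inr ⟨h, x ^ 2 / 8, ?_⟩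
    have h8 : x ^ 2 % 8 = 1 := by
      have h' : x % 8 = 1 ∨ x % 8 = 3 ∨ x % 8 = 5 ∨ x % 8 = 7 := by omega
      rcases h' with h' | h' | h' | h' <;> simp [pow_two, Int.mul_emod, h']
    omega

/-- For odd `m`, a solution at `4m` has first pair both even, or both odd with second pair of
equal parity: if `x, y` are odd then `x² + 3y² ≡ 4 (mod 8)`. -/
lemma parity_four {m x y z w : ℤ} (hm : m % 2 = 1)
    (h : 4 * m = x ^ 2 + 3 * y ^ 2 + 4 * z ^ 2 + 12 * w ^ 2) :
    (x % 2 = 0 ∧ y % 2 = 0) ∨ (x % 2 = 1 ∧ y % 2 = 1 ∧ (z + w) % 2 = 0) := by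
  rcases sq_cases x with ⟨_, a, ha⟩ | ⟨_, a, ha⟩ <;>
  rcases sq_cases y with ⟨_, b, hb⟩ | ⟨_, b, hb⟩ <;>
  rcases sq_cases z with ⟨_, c, hc⟩ | ⟨_, c, hc⟩ <;>
  rcases sq_cases w with ⟨_, d, hd⟩ | ⟨_, d, hd⟩ <;>
  rw [ha, hb, hc, hd] at h <;> omega

lemma parity_sum {m x y z w : ℤ} (hm : m % 2 = 1)
    (h : m = x ^ 2 + 3 * y ^ 2 + z ^ 2 + 3 * w ^ 2) :
    (x + y + z + w) % 2 = 1 := by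
  rcases sq_cases x with ⟨_, a, ha⟩ | ⟨_, a, ha⟩ <;>
  rcases sq_cases y with ⟨_, b, hb⟩ | ⟨_, b, hb⟩ <;>
  rcases sq_cases z with ⟨_, c, hc⟩ | ⟨_, c, hc⟩ <;>
  rcases sq_cases w with ⟨_, d, hd⟩ | ⟨_, d, hd⟩ <;>
  rw [ha, hb, hc, hd] at h <;> omega

/-- Solutions at `4m` whose first pair is odd, as two copies of `splitSet m`. -/
lemma odd_part {m : ℤ} (hm : m % 2 = 1) :
    {p ∈ formSet (4 * m) | p.1 % 2 = 1} = rotA '' splitSet m ∪ rotB '' splitSet m := by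
  ext ⟨x, y, z, w⟩
  simp only [formSet, splitSet, Set.mem_ofPred_eq, Set.mem_union, Set.mem_image, Prod.exists,
    rotA, rotB, Prod.mk.injEq]
  constructor
  · rintro ⟨h, hx⟩
    have hp := parity_four hm h
    have hy : y % 2 = 1 := by omega
    rcases (by omega : (x - y) % 4 = 0 ∨ (x + y) % 4 = 0) with h4 | h4
    · left
      obtain ⟨v, hv⟩ : ∃ v, x = y + 4 * v := ⟨(x - y) / 4, by omega⟩
      refine ⟨y + v, v, z, w, ⟨?_, by omega⟩, by omega, by omega, rfl, rfl⟩
      subst hv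
      linarith
    · right
      obtain ⟨v, hv⟩ : ∃ v, x = -y - 4 * v := ⟨(-y - x) / 4, by omega⟩
      refine ⟨-y - v, v, z, w, ⟨?_, by omega⟩, by omega, by omega, rfl, rfl⟩
      subst hv
      linarith
  · rintro (⟨u, v, z', w', ⟨h, hodd⟩, rfl, rfl, rfl, rfl⟩ |
      ⟨u, v, z', w', ⟨h, hodd⟩, rfl, rfl, rfl, rfl⟩)
    · exact ⟨by rw [h]; ring, by omega⟩
    · exact ⟨by rw [h]; ring, by omega⟩

/-- Solutions at `4m` whose first pair is even, as two copies of `splitSet m`. -/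
lemma even_part {m : ℤ} (hm : m % 2 = 1) :
    {p ∈ formSet (4 * m) | p.1 % 2 = 0} = dblFst '' splitSet m ∪ dblSwap '' splitSet m := by
  ext ⟨x, y, z, w⟩
  simp only [formSet, splitSet, Set.mem_ofPred_eq, Set.mem_union, Set.mem_image, Prod.exists,
    dblFst, dblSwap, Prod.mk.injEq]
  constructor
  · rintro ⟨h, hx⟩
    have hp := parity_four hm h
    obtain ⟨a, rfl⟩ : ∃ a, x = 2 * a := ⟨x / 2, by omega⟩
    obtain ⟨b, rfl⟩ : ∃ b, y = 2 * b := ⟨y / 2, by omega⟩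
    have h' : m = a ^ 2 + 3 * b ^ 2 + z ^ 2 + 3 * w ^ 2 := by linarith
    have hs := parity_sum hm h'
    rcases Int.emod_two_eq_zero_or_one (a + b) with hab | hab
    · exact Or.inr ⟨z, w, a, b, ⟨by linarith, by omega⟩, rfl, rfl, rfl, rfl⟩
    · exact Or.inl ⟨a, b, z, w, ⟨h', hab⟩, rfl, rfl, rfl, rfl⟩
  · rintro (⟨a, b, c, d, ⟨h, hodd⟩, rfl, rfl, rfl, rfl⟩ |
      ⟨a, b, c, d, ⟨h, hodd⟩, rfl, rfl, rfl, rfl⟩)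
    · exact ⟨by rw [h]; ring, by omega⟩
    · exact ⟨by rw [h]; ring, by omega⟩

/-- Doubling the second pair identifies the solutions at `m` with the members of `splitSet m` whose
second pair is even. -/
lemma dblSnd_image {m : ℤ} (hm : m % 2 = 1) :
    dblSnd '' formSet m = {p ∈ splitSet m | p.2.2.1 % 2 = 0} := by
  ext ⟨x, y, z, w⟩
  simp only [formSet, splitSet, Set.mem_ofPred_eq, Set.mem_image, Prod.exists,
    dblSnd, Prod.mk.injEq]
  constructor
  · rintro ⟨a, b, c, d, h, rfl, rfl, rfl, rfl⟩
    have h' : m = a ^ 2 + 3 * b ^ 2 + (2 * c) ^ 2 + 3 * (2 * d) ^ 2 := by rw [h]; ring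
    have := parity_sum hm h'
    exact ⟨⟨h', by omega⟩, by omega⟩
  · rintro ⟨⟨h, hodd⟩, hz⟩
    have := parity_sum hm h
    refine ⟨x, y, z / 2, w / 2, ?_, rfl, rfl, by omega, by omega⟩
    obtain ⟨c, rfl⟩ : ∃ c, z = 2 * c := ⟨z / 2, by omega⟩
    obtain ⟨d, rfl⟩ : ∃ d, w = 2 * d := ⟨w / 2, by omega⟩
    rw [h, Int.mul_ediv_cancel_left _ two_ne_zero, Int.mul_ediv_cancel_left _ two_ne_zero]
    ring

/-! ### Finiteness, disjointness and counting -/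

lemma splitSet_finite (m : ℤ) : (splitSet m).Finite := by
  refine Set.Finite.subset ((Set.finite_Icc (-m) m).prod ((Set.finite_Icc (-m) m).prod
    ((Set.finite_Icc (-m) m).prod (Set.finite_Icc (-m) m)))) ?_
  rintro ⟨x, y, z, w⟩ ⟨h, -⟩
  simp only [] at h
  have key : ∀ t : ℤ, t ^ 2 ≤ m → t ∈ Set.Icc (-m) m := fun t ht => by
    have h1 := Int.le_self_sq t
    have h2 := Int.le_self_sq (-t)
    rw [neg_sq] at h2
    constructor <;> linarith
  have := sq_nonneg x
  have := sq_nonneg y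
  have := sq_nonneg z
  have := sq_nonneg w
  exact ⟨key x (by linarith), key y (by linarith), key z (by linarith), key w (by linarith)⟩

lemma formSet_finite {m : ℤ} (hm : m % 2 = 1) : (formSet m).Finite := by
  refine Set.Finite.of_finite_image ?_ (dblSnd_inj.injOn)
  rw [dblSnd_image hm]
  exact (splitSet_finite m).subset (Set.sep_subset _ _)

lemma disjoint_rot {m : ℤ} : Disjoint (rotA '' splitSet m) (rotB '' splitSet m) := by
  rw [Set.disjoint_left]
  rintro _ ⟨⟨a, b, c, d⟩, ⟨-, h⟩, rfl⟩ ⟨⟨a', b', c', d'⟩, ⟨-, h'⟩, he⟩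
  simp only [rotA, rotB, Prod.mk.injEq] at h h' he
  omega

lemma disjoint_dbl {m : ℤ} (hm : m % 2 = 1) :
    Disjoint (dblFst '' splitSet m) (dblSwap '' splitSet m) := by
  rw [Set.disjoint_left]
  rintro _ ⟨⟨a, b, c, d⟩, ⟨h0, h⟩, rfl⟩ ⟨⟨a', b', c', d'⟩, ⟨-, h'⟩, he⟩
  simp only [dblFst, dblSwap, Prod.mk.injEq] at h0 h h' he
  have := parity_sum hm h0
  omega

lemma ncard_odd_part {m : ℤ} (hm : m % 2 = 1) :
    {p ∈ formSet (4 * m) | p.1 % 2 = 1}.ncard = 2 * (splitSet m).ncard := by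
  rw [odd_part hm, Set.ncard_union_eq disjoint_rot ((splitSet_finite m).image _)
    ((splitSet_finite m).image _), Set.ncard_image_of_injective _ rotA_inj,
    Set.ncard_image_of_injective _ rotB_inj, two_mul]

lemma ncard_even_part {m : ℤ} (hm : m % 2 = 1) :
    {p ∈ formSet (4 * m) | p.1 % 2 = 0}.ncard = 2 * (splitSet m).ncard := by
  rw [even_part hm, Set.ncard_union_eq (disjoint_dbl hm) ((splitSet_finite m).image _)
    ((splitSet_finite m).image _), Set.ncard_image_of_injective _ dblFst_inj,
    Set.ncard_image_of_injective _ dblSwap_inj, two_mul]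

lemma odd_part_finite {m : ℤ} (hm : m % 2 = 1) :
    {p ∈ formSet (4 * m) | p.1 % 2 = 1}.Finite := by
  rw [odd_part hm]
  exact ((splitSet_finite m).image _).union ((splitSet_finite m).image _)

lemma even_part_finite {m : ℤ} (hm : m % 2 = 1) :
    {p ∈ formSet (4 * m) | p.1 % 2 = 0}.Finite := by
  rw [even_part hm]
  exact ((splitSet_finite m).image _).union ((splitSet_finite m).image _)

lemma ncard_formSet_four {m : ℤ} (hm : m % 2 = 1) :
    (formSet (4 * m)).ncard = 4 * (splitSet m).ncard := by
  have hu : formSet (4 * m) =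
      {p ∈ formSet (4 * m) | p.1 % 2 = 1} ∪ {p ∈ formSet (4 * m) | p.1 % 2 = 0} := by
    ext p
    have := Int.emod_two_eq_zero_or_one p.1
    simp only [Set.mem_union, Set.mem_ofPred_eq]
    tauto
  have hd : Disjoint {p ∈ formSet (4 * m) | p.1 % 2 = 1} {p ∈ formSet (4 * m) | p.1 % 2 = 0} := by
    rw [Set.disjoint_left]
    rintro p ⟨-, h⟩ ⟨-, h'⟩
    omega
  rw [hu, Set.ncard_union_eq hd (odd_part_finite hm) (even_part_finite hm), ncard_odd_part hm,
    ncard_even_part hm]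
  ring

/-- Solutions at `4m` with odd first pair, sorted by the parity of the second pair. -/
lemma odd_part_split {m : ℤ} (hm : m % 2 = 1) :
    {p ∈ formSet (4 * m) | p.1 % 2 = 1} =
      oddSet (4 * m) ∪ (rotA '' (dblSnd '' formSet m) ∪ rotB '' (dblSnd '' formSet m)) := by
  rw [dblSnd_image hm]
  apply Set.Subset.antisymm
  · rintro ⟨x, y, z, w⟩ hq
    rcases Int.emod_two_eq_zero_or_one z with hz | hz
    · right
      have hq' := hq
      rw [odd_part hm] at hq'
      rcases hq' with ⟨p, hp, he⟩ | ⟨p, hp, he⟩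
      · refine Or.inl ⟨p, ⟨hp, ?_⟩, he⟩
        have hz' : p.2.2.1 = z := congrArg (fun q : Quad => q.2.2.1) he
        rwa [hz']
      · refine Or.inr ⟨p, ⟨hp, ?_⟩, he⟩
        have hz' : p.2.2.1 = z := congrArg (fun q : Quad => q.2.2.1) he
        rwa [hz']
    · left
      have hp : (x % 2 = 0 ∧ y % 2 = 0) ∨ (x % 2 = 1 ∧ y % 2 = 1 ∧ (z + w) % 2 = 0) :=
        parity_four hm hq.1
      have hx : x % 2 = 1 := hq.2
      have hy : y % 2 = 1 := by omega
      have hw : w % 2 = 1 := by omega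
      exact ⟨hq.1, hx, hy, hz, hw⟩
  · refine Set.union_subset (fun p hp => ⟨hp.1, hp.2.1⟩) ?_
    rw [odd_part hm]
    exact Set.union_subset_union (Set.image_mono (Set.sep_subset _ _))
      (Set.image_mono (Set.sep_subset _ _))

lemma ncard_oddSet {m : ℤ} (hm : m % 2 = 1) :
    2 * (splitSet m).ncard = (oddSet (4 * m)).ncard + 2 * (formSet m).ncard := by
  have hd1 : Disjoint (rotA '' (dblSnd '' formSet m)) (rotB '' (dblSnd '' formSet m)) := by
    rw [dblSnd_image hm]
    exact disjoint_rot.mono (Set.image_mono (Set.sep_subset _ _))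
      (Set.image_mono (Set.sep_subset _ _))
  have hd2 : Disjoint (oddSet (4 * m))
      (rotA '' (dblSnd '' formSet m) ∪ rotB '' (dblSnd '' formSet m)) := by
    rw [Set.disjoint_left]
    rintro p ⟨-, -, -, h, -⟩ (⟨_, ⟨q, -, rfl⟩, rfl⟩ | ⟨_, ⟨q, -, rfl⟩, rfl⟩)
    · simp only [rotA, dblSnd] at h
      omega
    · simp only [rotB, dblSnd] at h
      omega
  have hf : (dblSnd '' formSet m).Finite := (formSet_finite hm).image _
  have ho : (oddSet (4 * m)).Finite :=
    (odd_part_finite hm).subset fun p hp => ⟨hp.1, hp.2.1⟩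
  rw [← ncard_odd_part hm, odd_part_split hm,
    Set.ncard_union_eq hd2 ho ((hf.image _).union (hf.image _)),
    Set.ncard_union_eq hd1 (hf.image _) (hf.image _), Set.ncard_image_of_injective _ rotA_inj,
    Set.ncard_image_of_injective _ rotB_inj, Set.ncard_image_of_injective _ dblSnd_inj, two_mul]

/-! ### Translation to the counting functions -/

lemma Nquad_eq (m : ℕ) : Nquad 1 3 4 12 m = (formSet m).ncard := by
  simp only [Nquad, Nat.cast_one, one_mul, Nat.cast_ofNat]
  rfl

/-- The exact division by `2` in a triangular number. -/
lemma tri_eq (x : ℤ) : (2 * x - 1) ^ 2 = 8 * (x * (x - 1) / 2) + 1 := by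
  have h : x * (x - 1) % 2 = 0 := by
    rcases Int.emod_two_eq_zero_or_one x with h | h
    · simp [Int.mul_emod, h]
    · simp [Int.mul_emod, Int.sub_emod, h]
  have h2 : x * (x - 1) = 2 * (x * (x - 1) / 2) := by omega
  linear_combination 4 * h2

/-- The substitution `x ↦ 2x - 1` turns triangular numbers into odd squares. -/
lemma tquad_eq (n : ℕ) : tquad 1 3 4 12 n = (oddSet (8 * n + 20)).ncard := by
  let f : Quad → Quad := fun p =>
    (2 * p.1 - 1, 2 * p.2.1 - 1, 2 * p.2.2.1 - 1, 2 * p.2.2.2 - 1)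
  have hf : Function.Injective f := by
    rintro ⟨x, y, z, w⟩ ⟨x', y', z', w'⟩ h
    simp only [f, Prod.mk.injEq] at h ⊢
    omega
  have himg : oddSet (8 * n + 20) = f '' {p : Quad |
      (n : ℤ) = (1 : ℕ) * (p.1 * (p.1 - 1) / 2) + (3 : ℕ) * (p.2.1 * (p.2.1 - 1) / 2)
      + (4 : ℕ) * (p.2.2.1 * (p.2.2.1 - 1) / 2) + (12 : ℕ) * (p.2.2.2 * (p.2.2.2 - 1) / 2)} := by
    ext ⟨x, y, z, w⟩
    simp only [oddSet, formSet, Set.mem_ofPred_eq, Set.mem_image, Prod.exists, f, Prod.mk.injEq]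
    push_cast
    constructor
    · rintro ⟨h, hx, hy, hz, hw⟩
      obtain ⟨a, rfl⟩ : ∃ a, x = 2 * a - 1 := ⟨(x + 1) / 2, by omega⟩
      obtain ⟨b, rfl⟩ : ∃ b, y = 2 * b - 1 := ⟨(y + 1) / 2, by omega⟩
      obtain ⟨c, rfl⟩ : ∃ c, z = 2 * c - 1 := ⟨(z + 1) / 2, by omega⟩
      obtain ⟨d, rfl⟩ : ∃ d, w = 2 * d - 1 := ⟨(w + 1) / 2, by omega⟩
      refine ⟨a, b, c, d, ?_, rfl, rfl, rfl, rfl⟩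
      rw [tri_eq, tri_eq, tri_eq, tri_eq] at h
      linarith
    · rintro ⟨a, b, c, d, h, rfl, rfl, rfl, rfl⟩
      refine ⟨?_, by omega, by omega, by omega, by omega⟩
      rw [tri_eq, tri_eq, tri_eq, tri_eq]
      linarith
  rw [himg, Set.ncard_image_of_injective _ hf, tquad, ← Nat.card_coe_set_eq]
  rfl

end TriangularForm

open TriangularForm in
theorem stmt_8 (n : ℕ) (hn : 0 < n) :
    (tquad 1 3 4 12 n : ℚ) =
      1 / 2 * Nquad 1 3 4 12 (8 * n + 20) - 2 * Nquad 1 3 4 12 (2 * n + 5) := by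
  have hm : (2 * n + 5 : ℤ) % 2 = 1 := by omega
  have h4 : (8 * n + 20 : ℤ) = 4 * (2 * n + 5) := by ring
  have h1 := ncard_formSet_four hm
  have h2 := ncard_oddSet hm
  rw [tquad_eq, Nquad_eq, Nquad_eq]
  push_cast
  rw [h4, h1]
  have h3 : (2 * (splitSet (2 * n + 5)).ncard : ℚ) =
      (oddSet (4 * (2 * n + 5))).ncard + 2 * (formSet (2 * n + 5)).ncard := by
    exact_mod_cast h2
  push_cast
  linarith
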